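/- Let r ≥ 1, let X = ℙ^{n_1}×⋯×ℙ^{n_d} and Y = ℙ^{m_1}×⋯×ℙ^{m_e} (d,e ≥ 1, all n_i, m_j ≥ 1), with Cox rings S_X ⊆ S_{X×Y} as in the context. Then for every homogeneous ideal I ⊆ S_X with H_{S_X/I} = h_{r,X}, there exists a homogeneous ideal K ⊆ S_{X×Y} with H_{S_{X×Y}/K} = h_{r,X×Y} such that K ∩ S_X = I. -/

import Mathlib

/-!
Write `s_D` and `t_E` for the numbers of monomials of degree `D` in the `α`-variables and of degree `E`
in the `β`-variables. A polynomial `f` of the Cox ring of `X × Y` is read as `∑ f_b β^b` with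
coefficients `f_b` in `S_X`, and an ideal is built by prescribing in which ideal of `S_X` each
coefficient lies.

Fix a lexicographic order on monomials and let the rank of a monomial be the number of its
predecessors of the same degree. Multiplication by a monomial does not lower ranks
(`lexRank_le_add`), and the ranks in degree `D` are `0, …, s_D - 1` (`lexRank_image`). For `k ≥ 1` let
`L_k ⊆ S_X` be spanned by the monomials of degree `D` and rank at least `r - k s_D`, for all `D`
(truncated difference). As `s_D` does not decrease under multiplication by a monomial, `L_k` is an
ideal; the `L_k` increase with `k`, and the Hilbert function of `S_X / L_k` is
`min (s_D, r - k s_D)` (`tsub_finrank_lexTail`). Moreover `I ⊆ L_1` (`le_lexTail_one`): if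
`I_D ≠ 0` then `s_D > r`, so `L_1` contains everything in degree `D`. Put `L_0 = I`; the formula for
the Hilbert function holds for `k = 0` by hypothesis.

Let `K` consist of the `f` with `f_b ∈ L_{rank b}` for all `b`. It is an ideal since
`k ↦ L_k` and the rank are monotone, and it is homogeneous since each `L_k` is. In degree `(D, E)`
the Hilbert function of its quotient is
`∑_{k < t_E} min (s_D, r - k s_D) = min (s_D t_E, r)` (`finrank_coeffwise`, `sum_min_tsub`). A
polynomial in the `α`-variables alone has only the coefficient at `b = 0`, whose rank is `0`, so
`K ∩ S_X = L_0 = I`.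
-/

open MvPolynomial

noncomputable section

/-- The variables of the Cox ring of a product of projective spaces. -/
abbrev PPVars (d : ℕ) (n : Fin d → ℕ) : Type := Σ i : Fin d, Fin (n i + 1)

/-- The ℤ^d-grading on the Cox ring of `X = ℙ^{n_1}×⋯×ℙ^{n_d}`: `deg α_{ij} = e_i`. -/
def wPP (d : ℕ) (n : Fin d → ℕ) : PPVars d n → (Fin d → ℕ) := fun p => Pi.single p.1 1

/-- The Cox ring of `X × Y`: polynomials in the `α`-variables (left) and `β`-variables (right). -/
abbrev CoxXY (d e : ℕ) (n : Fin d → ℕ) (m : Fin e → ℕ) : Type :=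
  MvPolynomial (PPVars d n ⊕ PPVars e m) ℂ

/-- The ℤ^{d+e}-grading on the Cox ring of `X × Y`. -/
def wXY (d e : ℕ) (n : Fin d → ℕ) (m : Fin e → ℕ) :
    PPVars d n ⊕ PPVars e m → (Fin d → ℕ) × (Fin e → ℕ) :=
  Sum.elim (fun p => (Pi.single p.1 1, 0)) (fun q => (0, Pi.single q.1 1))

/-- The degree-`D` component of the Cox ring of `X`. -/
def coxPieceX (d : ℕ) (n : Fin d → ℕ) (D : Fin d → ℕ) :
    Submodule ℂ (MvPolynomial (PPVars d n) ℂ) :=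
  weightedHomogeneousSubmodule ℂ (wPP d n) D

/-- The degree-`(D,E)` component of the Cox ring of `X × Y`. -/
def coxPieceXY (d e : ℕ) (n : Fin d → ℕ) (m : Fin e → ℕ)
    (u : (Fin d → ℕ) × (Fin e → ℕ)) : Submodule ℂ (CoxXY d e n m) :=
  weightedHomogeneousSubmodule ℂ (wXY d e n m) u

/-- A homogeneous ideal of the Cox ring of `X`. -/
def IsHomogX (d : ℕ) (n : Fin d → ℕ) (I : Ideal (MvPolynomial (PPVars d n) ℂ)) : Prop :=
  Submodule.restrictScalars ℂ I =
    ⨆ D : Fin d → ℕ, (Submodule.restrictScalars ℂ I ⊓ coxPieceX d n D)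

/-- A homogeneous ideal of the Cox ring of `X × Y`. -/
def IsHomogXY (d e : ℕ) (n : Fin d → ℕ) (m : Fin e → ℕ) (K : Ideal (CoxXY d e n m)) : Prop :=
  Submodule.restrictScalars ℂ K =
    ⨆ u : (Fin d → ℕ) × (Fin e → ℕ), (Submodule.restrictScalars ℂ K ⊓ coxPieceXY d e n m u)

/-- The Hilbert function of `S_X/I`. -/
def HFX (d : ℕ) (n : Fin d → ℕ) (I : Ideal (MvPolynomial (PPVars d n) ℂ))
    (D : Fin d → ℕ) : ℕ :=
  Module.finrank ℂ ↥(coxPieceX d n D) -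
    Module.finrank ℂ ↥(Submodule.restrictScalars ℂ I ⊓ coxPieceX d n D)

/-- The Hilbert function of `S_{X×Y}/K`. -/
def HFXY (d e : ℕ) (n : Fin d → ℕ) (m : Fin e → ℕ) (K : Ideal (CoxXY d e n m))
    (u : (Fin d → ℕ) × (Fin e → ℕ)) : ℕ :=
  Module.finrank ℂ ↥(coxPieceXY d e n m u) -
    Module.finrank ℂ ↥(Submodule.restrictScalars ℂ K ⊓ coxPieceXY d e n m u)

/-! ### Lexicographic ranks of monomials -/

section Rank

variable {σ : Type*} [Fintype σ] {W : Type*} [AddCommMonoid W] (w : σ → W)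

/-- A lexicographic order on monomials: `a` precedes `b` when `lexKey a < lexKey b`. The variables are
ordered by an arbitrary numbering; only totality and translation invariance of the order are used. -/
def lexKey (m : σ →₀ ℕ) : Lex (Fin (Fintype.card σ) →₀ ℕ) :=
  toLex (Finsupp.domCongr (Fintype.equivFin σ) m)

lemma lexKey_injective : Function.Injective (lexKey (σ := σ)) := fun _ _ h =>
  (Finsupp.domCongr (M := ℕ) (Fintype.equivFin σ)).injective (toLex.injective h)

lemma lexKey_add_lt {a b : σ →₀ ℕ} (h : lexKey a < lexKey b) (c : σ →₀ ℕ) :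
    lexKey (a + c) < lexKey (b + c) := by
  have hadd : ∀ x : σ →₀ ℕ, lexKey (x + c) = lexKey x + lexKey c := fun x => by
    simp [lexKey, map_add]
  rw [hadd, hadd]
  exact add_lt_add_left h _

/-- The exponents of the monomials of degree `D`. -/
def monos (D : W) : Set (σ →₀ ℕ) := {m | Finsupp.weight w m = D}

/-- The number of monomials of the same degree as `m` that precede `m`. -/
def lexRank (m : σ →₀ ℕ) : ℕ :=
  {m' : σ →₀ ℕ | Finsupp.weight w m' = Finsupp.weight w m ∧ lexKey m' < lexKey m}.ncard

variable (hfin : ∀ D : W, (monos w D).Finite)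
include hfin

omit [Fintype σ] in
lemma ncard_monos_le (D : W) (c : σ →₀ ℕ) :
    (monos w D).ncard ≤ (monos w (D + Finsupp.weight w c)).ncard := by
  refine Set.ncard_le_ncard_of_injOn (· + c) ?_ ?_ (hfin _)
  · intro a ha
    simp only [monos, Set.mem_ofPred_eq, map_add] at ha ⊢
    rw [ha]
  · intro a _ b _ h
    exact add_right_cancel h

/-- Translation by `c` is strictly increasing, so it carries the predecessors of `m` to predecessors
of `m + c`. -/
lemma lexRank_le_add (m c : σ →₀ ℕ) : lexRank w m ≤ lexRank w (m + c) := by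
  refine Set.ncard_le_ncard_of_injOn (· + c) ?_ ?_ ((hfin (Finsupp.weight w (m + c))).subset ?_)
  · rintro a ⟨ha, hlt⟩
    exact ⟨by simp [map_add, ha], lexKey_add_lt hlt c⟩
  · intro a _ b _ h
    exact add_right_cancel h
  · rintro a ⟨ha, -⟩
    exact ha

lemma lexRank_lt_of_lexKey_lt {a b : σ →₀ ℕ} (hab : Finsupp.weight w a = Finsupp.weight w b)
    (h : lexKey a < lexKey b) : lexRank w a < lexRank w b := by
  refine Set.ncard_lt_ncard ⟨?_, ?_⟩ ((hfin (Finsupp.weight w b)).subset fun x hx => hx.1)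
  · rintro x ⟨hx, hlt⟩
    exact ⟨hx.trans hab, hlt.trans h⟩
  · intro hsub
    exact lt_irrefl _ (hsub (show a ∈ _ from ⟨hab, h⟩)).2

lemma lexRank_lt_ncard (m : σ →₀ ℕ) : lexRank w m < (monos w (Finsupp.weight w m)).ncard := by
  refine Set.ncard_lt_ncard ⟨fun x hx => hx.1, ?_⟩ (hfin _)
  intro hsub
  exact lt_irrefl _ (hsub (show m ∈ monos w _ from rfl)).2

/-- With `s` monomials in degree `D`, the ranks in degree `D` are exactly `0, …, s - 1`. -/
lemma lexRank_image (D : W) :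
    (hfin D).toFinset.image (lexRank w) = Finset.range (monos w D).ncard := by
  apply Finset.eq_of_subset_of_card_le
  · intro x hx
    obtain ⟨a, ha, rfl⟩ := Finset.mem_image.1 hx
    have ha' : Finsupp.weight w a = D := by simpa [monos] using ha
    subst ha'
    exact Finset.mem_range.2 (lexRank_lt_ncard w hfin a)
  · rw [Finset.card_image_of_injOn, Finset.card_range, Set.ncard_eq_toFinset_card _ (hfin D)]
    intro a ha b hb hab
    have ha' : Finsupp.weight w a = D := by simpa [monos] using ha
    have hb' : Finsupp.weight w b = D := by simpa [monos] using hb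
    rcases lt_trichotomy (lexKey a) (lexKey b) with h | h | h
    · exact absurd hab (lexRank_lt_of_lexKey_lt w hfin (ha'.trans hb'.symm) h).ne
    · exact lexKey_injective h
    · exact absurd hab (lexRank_lt_of_lexKey_lt w hfin (hb'.trans ha'.symm) h).ne'

lemma lexRank_injOn (D : W) : Set.InjOn (lexRank w) (hfin D).toFinset := by
  rw [← Finset.card_image_iff, lexRank_image w hfin, Finset.card_range,
    Set.ncard_eq_toFinset_card _ (hfin D)]

lemma sum_lexRank (D : W) (f : ℕ → ℕ) :
    ∑ m ∈ (hfin D).toFinset, f (lexRank w m) = ∑ k ∈ Finset.range (monos w D).ncard, f k := by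
  rw [← lexRank_image w hfin D, Finset.sum_image (lexRank_injOn w hfin D)]

lemma ncard_rank_ge (D : W) (c : ℕ) :
    (monos w D ∩ {m | c ≤ lexRank w m}).ncard = (monos w D).ncard - c := by
  have h1 : monos w D ∩ {m | c ≤ lexRank w m} =
      ((hfin D).toFinset.filter (fun m => c ≤ lexRank w m) : Finset _) := by
    ext; simp
  rw [h1, Set.ncard_coe_finset, Finset.card_filter,
    sum_lexRank w hfin D fun k => if c ≤ k then 1 else 0, ← Finset.card_filter]
  have : (Finset.range (monos w D).ncard).filter (fun k => c ≤ k)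
      = Finset.Ico c (monos w D).ncard := by
    ext; simp; omega
  rw [this, Nat.card_Ico]

end Rank

lemma finrank_restrictSupport {σ : Type*} (s : Set (σ →₀ ℕ)) :
    Module.finrank ℂ (restrictSupport ℂ s) = s.ncard := by
  rw [Module.finrank_eq_nat_card_basis (basisRestrictSupport ℂ s)]
  rfl

lemma finite_restrictSupport {σ : Type*} {s : Set (σ →₀ ℕ)} (hs : s.Finite) :
    Module.Finite ℂ (restrictSupport ℂ s) := by
  have := hs.to_subtype
  exact Module.Finite.of_basis (basisRestrictSupport ℂ s)

/-- Cutting `min (s * N) r` into `N` layers of size at most `s`, filled greedily. -/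
lemma sum_min_tsub (s r : ℕ) (N : ℕ) :
    ∑ k ∈ Finset.range N, min s (r - k * s) = min (s * N) r := by
  induction N with
  | zero => simp
  | succ N ih =>
    rw [Finset.sum_range_succ, ih, mul_comm N s, Nat.mul_succ]
    omega

/-! ### Coefficients with respect to the second set of variables -/

section Coeffs

variable {σ τ : Type*}

/-- A polynomial in the variables `σ ⊕ τ`, read as a polynomial in `τ` with coefficients in the
polynomial ring on `σ`. -/
def toIter : MvPolynomial (σ ⊕ τ) ℂ ≃ₐ[ℂ] MvPolynomial τ (MvPolynomial σ ℂ) :=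
  (renameEquiv ℂ (Equiv.sumComm σ τ)).trans (sumAlgEquiv ℂ τ σ)

/-- The exponent of the product of the `σ`-monomial `a` and the `τ`-monomial `b`. -/
def joinExp (a : σ →₀ ℕ) (b : τ →₀ ℕ) : σ ⊕ τ →₀ ℕ := Finsupp.sumElim a b

lemma exists_joinExp (m : σ ⊕ τ →₀ ℕ) : ∃ a b, m = joinExp a b :=
  ⟨(Finsupp.sumFinsuppEquivProdFinsupp m).1, (Finsupp.sumFinsuppEquivProdFinsupp m).2,
    (Finsupp.sumFinsuppEquivProdFinsupp.symm_apply_apply m).symm⟩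

lemma toIter_rename_inl (f : MvPolynomial σ ℂ) :
    toIter (τ := τ) (rename Sum.inl f) = C f := by
  have : (toIter (σ := σ) (τ := τ)).toAlgHom.comp (rename Sum.inl) =
      IsScalarTower.toAlgHom ℂ (MvPolynomial σ ℂ) (MvPolynomial τ (MvPolynomial σ ℂ)) := by
    ext; simp [toIter]
  exact DFunLike.congr_fun this f

lemma toIter_monomial (a : σ →₀ ℕ) (b : τ →₀ ℕ) (c : ℂ) :
    toIter (monomial (joinExp a b) c) = monomial b (monomial a c) := by
  have hj : joinExp a b = a.mapDomain Sum.inl + b.mapDomain Sum.inr := by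
    ext (x | x)
    · simp [joinExp, Finsupp.mapDomain_apply Sum.inl_injective, Finsupp.mapDomain_of_notMem_range]
    · simp [joinExp, Finsupp.mapDomain_apply Sum.inr_injective, Finsupp.mapDomain_of_notMem_range]
  have hr : (toIter (σ := σ) (τ := τ)).toAlgHom.comp (rename Sum.inr) =
      MvPolynomial.mapAlgHom (Algebra.ofId _ _) := by
    ext; simp [toIter]
  have hr' : toIter (rename Sum.inr (monomial b (1 : ℂ)) : MvPolynomial (σ ⊕ τ) ℂ) =
      monomial b 1 := by
    refine (DFunLike.congr_fun hr _).trans ?_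
    change MvPolynomial.map _ (monomial b 1) = _
    rw [map_monomial, map_one]
  have hm : (monomial (joinExp a b) c : MvPolynomial (σ ⊕ τ) ℂ) =
      rename Sum.inl (monomial a c) * rename Sum.inr (monomial b 1) := by
    rw [rename_monomial, rename_monomial, monomial_mul, mul_one, hj]
  rw [hm, map_mul, toIter_rename_inl, hr', C_mul_monomial, mul_one]

lemma coeff_toIter (f : MvPolynomial (σ ⊕ τ) ℂ) (a : σ →₀ ℕ) (b : τ →₀ ℕ) :
    coeff a (coeff b (toIter f)) = coeff (joinExp a b) f := by
  classical
  induction f using MvPolynomial.induction_on' with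
  | add p q hp hq => simp [hp, hq]
  | monomial m c =>
    obtain ⟨a', b', rfl⟩ := exists_joinExp m
    rw [toIter_monomial, coeff_monomial, coeff_monomial]
    have hiff : joinExp a' b' = joinExp a b ↔ a' = a ∧ b' = b := by
      rw [← Prod.mk.injEq]
      exact (Finsupp.sumFinsuppEquivProdFinsupp (α := σ) (β := τ) (γ := ℕ)).symm.injective.eq_iff
        (a := (a', b')) (b := (a, b))
    rw [if_congr hiff rfl rfl]
    by_cases hb : b' = b <;> by_cases ha : a' = a <;> simp [hb, ha, coeff_monomial]

/-- The polynomials whose coefficient at each `τ`-monomial `b` lies in `N b`. -/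
def coeffwise (N : (τ →₀ ℕ) → Submodule ℂ (MvPolynomial σ ℂ)) :
    Submodule ℂ (MvPolynomial (σ ⊕ τ) ℂ) where
  carrier := {f | ∀ b, coeff b (toIter f) ∈ N b}
  add_mem' := fun hf hg b => by
    rw [map_add, coeff_add]; exact add_mem (hf b) (hg b)
  zero_mem' := fun b => by simp
  smul_mem' := fun c f hf b => by
    rw [map_smul, coeff_smul]; exact (N b).smul_mem c (hf b)

lemma mem_coeffwise {N : (τ →₀ ℕ) → Submodule ℂ (MvPolynomial σ ℂ)}
    {f : MvPolynomial (σ ⊕ τ) ℂ} : f ∈ coeffwise N ↔ ∀ b, coeff b (toIter f) ∈ N b := Iff.rfl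

lemma finrank_coeffwise (N : (τ →₀ ℕ) → Submodule ℂ (MvPolynomial σ ℂ)) (T : Finset (τ →₀ ℕ))
    (hT : ∀ b ∉ T, N b = ⊥) (hN : ∀ b, Module.Finite ℂ (N b)) :
    Module.finrank ℂ (coeffwise N) = ∑ b ∈ T, Module.finrank ℂ (N b) := by
  classical
  let F : coeffwise N →ₗ[ℂ] ((b : T) → N b) :=
    { toFun := fun f b => ⟨coeff b.1 (toIter f.1), f.2 b.1⟩
      map_add' := fun f g => by ext; simp
      map_smul' := fun c f => by ext; simp }
  have hF : Function.Bijective F := by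
    constructor
    · rintro ⟨f, hf⟩ ⟨g, hg⟩ h
      apply Subtype.ext
      apply (toIter (σ := σ) (τ := τ)).injective
      refine MvPolynomial.ext _ _ fun b => ?_
      by_cases hb : b ∈ T
      · exact congrArg Subtype.val (congrFun h ⟨b, hb⟩)
      · have h1 := hf b
        have h2 := hg b
        rw [hT b hb, Submodule.mem_bot] at h1 h2
        exact h1.trans h2.symm
    · intro g
      have hc : ∀ b, coeff b (∑ x : T, monomial x.1 (g x).1) =
          if h : b ∈ T then (g ⟨b, h⟩).1 else 0 := by
        intro b
        rw [coeff_sum]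
        simp only [coeff_monomial]
        split_ifs with h
        · rw [Finset.sum_eq_single ⟨b, h⟩]
          · simp
          · intro x _ hx
            rw [if_neg fun h' => hx (Subtype.ext h')]
          · simp
        · exact Finset.sum_eq_zero fun x _ => if_neg fun h' : x.1 = b => h (h' ▸ x.2)
      refine ⟨⟨toIter.symm (∑ x : T, monomial x.1 (g x).1), fun b => ?_⟩, ?_⟩
      · rw [AlgEquiv.apply_symm_apply, hc]
        split_ifs with h
        · exact (g ⟨b, h⟩).2
        · exact zero_mem _
      · ext1 b
        apply Subtype.ext
        change coeff b.1 (toIter (toIter.symm _)) = _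
        rw [AlgEquiv.apply_symm_apply, hc, dif_pos b.2]
  rw [(LinearEquiv.ofBijective F hF).finrank_eq, Module.finrank_pi_fintype,
    Finset.sum_coe_sort T fun b => Module.finrank ℂ (N b)]

end Coeffs

/-! ### The ideals of monomials of large rank -/

section LexTail

variable {σ : Type*} [Fintype σ] {W : Type*} [AddCommMonoid W] (w : σ → W)
  (hfin : ∀ D : W, (monos w D).Finite)

/-- The monomial ideal which in each degree `D`, with `s` monomials, is spanned by all of them except
the first `r - k * s` (truncated difference). It is an ideal because multiplication by a monomial
decreases neither `s` nor the rank. -/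
def lexTail (r k : ℕ) : Ideal (MvPolynomial σ ℂ) :=
  restrictSupportIdeal ℂ
    {m : σ →₀ ℕ | r ≤ k * (monos w (Finsupp.weight w m)).ncard + lexRank w m} <| by
      intro a b hab ha
      obtain ⟨c, rfl⟩ := le_iff_exists_add.1 hab
      have h1 := ncard_monos_le w hfin (Finsupp.weight w a) c
      rw [← map_add] at h1
      exact le_trans ha (add_le_add (Nat.mul_le_mul_left k h1) (lexRank_le_add w hfin a c))

lemma mem_lexTail {r k : ℕ} {f : MvPolynomial σ ℂ} :
    f ∈ lexTail w hfin r k ↔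
      ∀ m, coeff m f ≠ 0 → r ≤ k * (monos w (Finsupp.weight w m)).ncard + lexRank w m :=
  ⟨fun h _ hm => h (mem_support_iff.2 hm), fun h m hm => h m (mem_support_iff.1 hm)⟩

lemma lexTail_mono (r : ℕ) : Monotone (lexTail w hfin r) := by
  intro k l hkl f hf
  rw [mem_lexTail] at hf ⊢
  exact fun m hm => (hf m hm).trans (Nat.add_le_add_right (Nat.mul_le_mul_right _ hkl) _)

omit [Fintype σ] in
lemma weightedHomogeneousSubmodule_eq_restrictSupport (D : W) :
    weightedHomogeneousSubmodule ℂ w D = restrictSupport ℂ (monos w D) :=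
  weightedHomogeneousSubmodule_eq_finsupp_supported ℂ w D

/-- The Hilbert function of the quotient by `lexTail`. -/
lemma tsub_finrank_lexTail (r k : ℕ) (D : W) :
    (monos w D).ncard - Module.finrank ℂ ↥((lexTail w hfin r k).restrictScalars ℂ ⊓
      weightedHomogeneousSubmodule ℂ w D) =
      min (monos w D).ncard (r - k * (monos w D).ncard) := by
  have h : (lexTail w hfin r k).restrictScalars ℂ ⊓ weightedHomogeneousSubmodule ℂ w D =
      restrictSupport ℂ
        (monos w D ∩ {m | r - k * (monos w D).ncard ≤ lexRank w m}) := by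
    rw [weightedHomogeneousSubmodule_eq_restrictSupport]
    ext f
    rw [Submodule.mem_inf, Submodule.restrictScalars_mem, mem_lexTail, mem_restrictSupport_iff,
      mem_restrictSupport_iff]
    constructor
    · rintro ⟨h1, h2⟩ m hm
      have hD : Finsupp.weight w m = D := h2 hm
      have := h1 m (mem_support_iff.1 hm)
      rw [hD] at this
      exact ⟨hD, tsub_le_iff_left.2 this⟩
    · intro h
      refine ⟨fun m hm => ?_, fun m hm => (h hm).1⟩
      obtain ⟨hD, h2⟩ := h (mem_support_iff.2 hm)
      rw [show Finsupp.weight w m = D from hD]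
      exact tsub_le_iff_left.1 h2
  rw [h, finrank_restrictSupport, ncard_rank_ge w hfin]
  omega

end LexTail

/-! ### Ideals built from a chain of ideals of coefficients -/

section Extension

variable {σ τ : Type*}

/-- The polynomials whose coefficient at each `τ`-monomial `b` lies in `J (k b)`. Since `J ∘ k` does
not decrease when `b` is multiplied by a monomial, this is an ideal. -/
def extIdeal (J : ℕ → Ideal (MvPolynomial σ ℂ)) (hJ : Monotone J) (k : (τ →₀ ℕ) → ℕ)
    (hk : ∀ a c, k c ≤ k (a + c)) : Ideal (MvPolynomial (σ ⊕ τ) ℂ) where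
  carrier := {f | ∀ b, coeff b (toIter f) ∈ J (k b)}
  add_mem' := fun hf hg b => by
    rw [map_add, coeff_add]; exact add_mem (hf b) (hg b)
  zero_mem' := fun b => by simp
  smul_mem' := fun g f hf b => by
    classical
    rw [smul_eq_mul, map_mul, coeff_mul]
    refine sum_mem fun p hp => Ideal.mul_mem_left _ _ (hJ ?_ (hf p.2))
    rw [← Finset.HasAntidiagonal.mem_antidiagonal.1 hp]
    exact hk _ _

lemma mem_extIdeal {J : ℕ → Ideal (MvPolynomial σ ℂ)} {hJ : Monotone J} {k : (τ →₀ ℕ) → ℕ}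
    {hk : ∀ a c, k c ≤ k (a + c)} {f : MvPolynomial (σ ⊕ τ) ℂ} :
    f ∈ extIdeal J hJ k hk ↔ ∀ b, coeff b (toIter f) ∈ J (k b) := Iff.rfl

end Extension

/-! ### The Cox rings -/

section Cox

variable {d e : ℕ} {n : Fin d → ℕ} {m : Fin e → ℕ}

lemma le_weight_wPP (a : PPVars d n →₀ ℕ) (p : PPVars d n) :
    a p ≤ Finsupp.weight (wPP d n) a p.1 := by
  rw [Finsupp.weight_eq_sum, Finset.sum_apply]
  refine le_trans ?_ (Finset.single_le_sum (f := fun q => (a q • wPP d n q) p.1)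
    (fun _ _ => Nat.zero_le _) (Finset.mem_univ p))
  simp [wPP]

lemma finite_monos_wPP (D : Fin d → ℕ) : (monos (wPP d n) D).Finite := by
  refine (Set.finite_Iic (Finsupp.equivFunOnFinite.symm fun p : PPVars d n => D p.1)).subset ?_
  rintro a rfl p
  exact le_weight_wPP a p

lemma lexRank_wPP_zero : lexRank (wPP d n) 0 = 0 := by
  have : {m' : PPVars d n →₀ ℕ | Finsupp.weight (wPP d n) m' =
      Finsupp.weight (wPP d n) (0 : PPVars d n →₀ ℕ) ∧
      lexKey m' < lexKey 0} = ∅ := by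
    refine Set.eq_empty_of_forall_notMem ?_
    rintro a ⟨h, hlt⟩
    have ha : a = 0 := by
      ext p
      have := le_weight_wPP a p
      rw [h] at this
      simpa using this
    exact lt_irrefl _ (ha ▸ hlt)
  rw [lexRank, this, Set.ncard_empty]

lemma weight_wXY (a : PPVars d n →₀ ℕ) (b : PPVars e m →₀ ℕ) :
    Finsupp.weight (wXY d e n m) (joinExp a b) =
      (Finsupp.weight (wPP d n) a, Finsupp.weight (wPP e m) b) := by
  simp only [Finsupp.weight_eq_sum, Fintype.sum_sum_type]
  ext i <;> simp [joinExp, wXY, wPP, Prod.fst_sum, Prod.snd_sum]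

lemma finrank_coxPieceX (D : Fin d → ℕ) :
    Module.finrank ℂ (coxPieceX d n D) = (monos (wPP d n) D).ncard := by
  rw [coxPieceX, weightedHomogeneousSubmodule_eq_restrictSupport, finrank_restrictSupport]

lemma finite_coxPieceX (D : Fin d → ℕ) : Module.Finite ℂ (coxPieceX d n D) := by
  rw [coxPieceX, weightedHomogeneousSubmodule_eq_restrictSupport]
  exact finite_restrictSupport (finite_monos_wPP D)

lemma coeff_toIter_component (f : CoxXY d e n m) (D : Fin d → ℕ) (E : Fin e → ℕ)
    (b : PPVars e m →₀ ℕ) :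
    coeff b (toIter (weightedHomogeneousComponent (wXY d e n m) (D, E) f)) =
      if Finsupp.weight (wPP e m) b = E then
        weightedHomogeneousComponent (wPP d n) D (coeff b (toIter f)) else 0 := by
  classical
  ext a
  rw [coeff_toIter, coeff_weightedHomogeneousComponent, weight_wXY]
  by_cases hb : Finsupp.weight (wPP e m) b = E
  · simp [hb, coeff_weightedHomogeneousComponent, coeff_toIter]
  · simp [hb]

lemma coxPieceXY_eq (D : Fin d → ℕ) (E : Fin e → ℕ) :
    coxPieceXY d e n m (D, E) = coeffwise fun b =>
      if Finsupp.weight (wPP e m) b = E then coxPieceX d n D else ⊥ := by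
  ext f
  rw [mem_coeffwise]
  constructor
  · intro hf b
    have h := coeff_toIter_component f D E b
    rw [(show f.IsWeightedHomogeneous _ (D, E) from hf).weightedHomogeneousComponent_same] at h
    rw [h]
    split_ifs
    · exact weightedHomogeneousComponent_mem _ _ _
    · exact zero_mem _
  · intro hf x hx
    obtain ⟨a, b, rfl⟩ := exists_joinExp x
    rw [← coeff_toIter] at hx
    have h := hf b
    rw [weight_wXY]
    split_ifs at h with hb
    · rw [hb, (show (coeff b (toIter f)).IsWeightedHomogeneous _ D from h) hx]
    · rw [Submodule.mem_bot] at h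
      simp [h] at hx

lemma IsHomogX.component_mem {I : Ideal (MvPolynomial (PPVars d n) ℂ)} (hI : IsHomogX d n I)
    {f : MvPolynomial (PPVars d n) ℂ} (hf : f ∈ I) (D : Fin d → ℕ) :
    weightedHomogeneousComponent (wPP d n) D f ∈ I := by
  have hf' : f ∈ Submodule.restrictScalars ℂ I := hf
  rw [hI] at hf'
  clear hf
  induction hf' using Submodule.iSup_induction' with
  | mem D' x hx =>
    by_cases h : D = D'
    · subst h
      rw [(show x.IsWeightedHomogeneous _ D from hx.2).weightedHomogeneousComponent_same]
      exact hx.1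
    · rw [(show x.IsWeightedHomogeneous _ D' from hx.2).weightedHomogeneousComponent_ne _ h]
      exact zero_mem _
  | zero => simp
  | add x y _ _ hx hy =>
    rw [map_add]
    exact add_mem hx hy

lemma lexTail_component_mem (r k : ℕ) {f : MvPolynomial (PPVars d n) ℂ}
    (hf : f ∈ lexTail (wPP d n) finite_monos_wPP r k) (D : Fin d → ℕ) :
    weightedHomogeneousComponent (wPP d n) D f ∈ lexTail (wPP d n) finite_monos_wPP r k := by
  classical
  rw [mem_lexTail] at hf ⊢
  intro x hx
  rw [coeff_weightedHomogeneousComponent] at hx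
  exact hf x (ite_ne_right_iff.1 hx).2

/-- The chain `I ≤ lexTail 1 ≤ lexTail 2 ≤ ⋯` from which the extension of `I` is built. -/
def lexLayers (r : ℕ) (I : Ideal (MvPolynomial (PPVars d n) ℂ)) :
    ℕ → Ideal (MvPolynomial (PPVars d n) ℂ)
  | 0 => I
  | k + 1 => lexTail (wPP d n) finite_monos_wPP r (k + 1)

/-- Where `I` is nonzero in degree `D`, its Hilbert function is smaller than the number of monomials of
degree `D`, hence equals `r`; there `lexTail 1` is the whole degree-`D` component. -/
lemma le_lexTail_one {r : ℕ} {I : Ideal (MvPolynomial (PPVars d n) ℂ)}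
    (hI : IsHomogX d n I)
    (hIHF : ∀ D, HFX d n I D = min (Module.finrank ℂ (coxPieceX d n D)) r) :
    I ≤ lexTail (wPP d n) finite_monos_wPP r 1 := by
  classical
  intro f hf
  rw [mem_lexTail]
  intro x hx
  set D := Finsupp.weight (wPP d n) x with hD
  have hne : weightedHomogeneousComponent (wPP d n) D f ≠ 0 := by
    intro h0
    have := congrArg (coeff x) h0
    rw [coeff_weightedHomogeneousComponent, if_pos hD.symm, coeff_zero] at this
    exact hx this
  have := finite_coxPieceX (n := n) D
  have hpos : 0 < Module.finrank ℂ ↥(Submodule.restrictScalars ℂ I ⊓ coxPieceX d n D) := by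
    have : Module.Finite ℂ ↥(Submodule.restrictScalars ℂ I ⊓ coxPieceX d n D) :=
      Submodule.finiteDimensional_inf_right _ _
    refine Module.finrank_pos_iff_exists_ne_zero.2 ⟨⟨_, hI.component_mem hf D,
      weightedHomogeneousComponent_mem _ _ _⟩, fun h => hne (congrArg Subtype.val h)⟩
  have hle := Submodule.finrank_mono
    (inf_le_right : Submodule.restrictScalars ℂ I ⊓ coxPieceX d n D ≤ _)
  have h := hIHF D
  rw [HFX] at h
  rw [← finrank_coxPieceX]
  omega

end Cox

/-- Proposition 3.3 for products of projective spaces: the natural map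
`Hilb^{h_{r,X×Y}} → Hilb^{h_{r,X}}`, `[K] ↦ [K ∩ S_X]`, is surjective: every homogeneous ideal
`I ⊆ S_X` with Hilbert function `h_{r,X}` extends to a homogeneous ideal `K ⊆ S_{X×Y}` with
Hilbert function `h_{r,X×Y}` such that `K ∩ S_X = I`. -/
theorem restriction_of_ideals_is_surjective (r d e : ℕ) (hr : 1 ≤ r) (hd : 1 ≤ d) (he : 1 ≤ e)
    (n : Fin d → ℕ) (m : Fin e → ℕ) (hn : ∀ i, 1 ≤ n i) (hm : ∀ j, 1 ≤ m j)
    (I : Ideal (MvPolynomial (PPVars d n) ℂ))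
    (hIhom : IsHomogX d n I)
    (hIHF : ∀ D : Fin d → ℕ, HFX d n I D = min (Module.finrank ℂ ↥(coxPieceX d n D)) r) :
    ∃ K : Ideal (CoxXY d e n m),
      IsHomogXY d e n m K ∧
      (∀ u : (Fin d → ℕ) × (Fin e → ℕ),
        HFXY d e n m K u = min (Module.finrank ℂ ↥(coxPieceXY d e n m u)) r) ∧
      Ideal.comap (MvPolynomial.rename
        (Sum.inl : PPVars d n → PPVars d n ⊕ PPVars e m)).toRingHom K = I := by
  classical
  have hmono : Monotone (lexLayers r I) := by
    refine monotone_nat_of_le_succ fun k => ?_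
    cases k with
    | zero => exact le_lexTail_one hIhom hIHF
    | succ k => exact lexTail_mono _ finite_monos_wPP r (Nat.le_succ _)
  have hcomp : ∀ k (f : MvPolynomial (PPVars d n) ℂ), f ∈ lexLayers r I k → ∀ D,
      weightedHomogeneousComponent (wPP d n) D f ∈ lexLayers r I k := by
    intro k f hf D
    cases k with
    | zero => exact hIhom.component_mem hf D
    | succ k => exact lexTail_component_mem r (k + 1) hf D
  have hlayer : ∀ k D, (monos (wPP d n) D).ncard - Module.finrank ℂ
      ↥((lexLayers r I k).restrictScalars ℂ ⊓ coxPieceX d n D) =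
        min (monos (wPP d n) D).ncard (r - k * (monos (wPP d n) D).ncard) := by
    intro k D
    cases k with
    | zero =>
      have h := hIHF D
      rw [HFX, finrank_coxPieceX] at h
      rw [zero_mul, tsub_zero]
      exact h
    | succ k => exact tsub_finrank_lexTail _ finite_monos_wPP r (k + 1) D
  have hk : ∀ a c : PPVars e m →₀ ℕ, lexRank (wPP e m) c ≤ lexRank (wPP e m) (a + c) := by
    intro a c
    rw [add_comm]
    exact lexRank_le_add _ finite_monos_wPP c a
  refine ⟨extIdeal (lexLayers r I) hmono (lexRank (wPP e m)) hk, ?_, ?_, ?_⟩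
  · refine le_antisymm (fun f hf => ?_) (iSup_le fun u => inf_le_left)
    rw [← sum_weightedHomogeneousComponent (wXY d e n m) f]
    refine finsum_induction (· ∈ _) (zero_mem _) (fun _ _ => add_mem) fun u => ?_
    refine Submodule.mem_iSup_of_mem u ⟨fun b => ?_, weightedHomogeneousComponent_mem _ _ _⟩
    rw [coeff_toIter_component f u.1 u.2 b]
    split_ifs
    · exact hcomp _ _ (hf b) _
    · exact zero_mem _
  · rintro ⟨D, E⟩
    set K := extIdeal (lexLayers r I) hmono (lexRank (wPP e m)) hk with hK
    have hT : ∀ b, b ∈ (finite_monos_wPP (n := m) E).toFinset ↔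
        Finsupp.weight (wPP e m) b = E := fun b => by simp [monos]
    have hfinD := finite_coxPieceX (n := n) D
    have hinf : Submodule.restrictScalars ℂ K ⊓ coxPieceXY d e n m (D, E) =
        coeffwise fun b => if Finsupp.weight (wPP e m) b = E then
          (lexLayers r I (lexRank (wPP e m) b)).restrictScalars ℂ ⊓ coxPieceX d n D else ⊥ := by
      rw [coxPieceXY_eq]
      ext f
      rw [Submodule.mem_inf, mem_coeffwise, mem_coeffwise, Submodule.restrictScalars_mem,
        mem_extIdeal, ← forall_and]
      refine forall_congr' fun b => ?_
      split_ifs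
      · rfl
      · rw [Submodule.mem_bot]
        exact ⟨And.right, fun h => ⟨h ▸ zero_mem _, h⟩⟩
    -- The number of monomials `b` of degree `E` times the dimension of the component `D`,
    -- kept as a sum over `b` for comparison with `K`.
    have hXY : Module.finrank ℂ (coxPieceXY d e n m (D, E)) =
        ∑ b ∈ (finite_monos_wPP (n := m) E).toFinset, (monos (wPP d n) D).ncard := by
      rw [coxPieceXY_eq, finrank_coeffwise _ (finite_monos_wPP E).toFinset]
      · refine Finset.sum_congr rfl fun b hb => ?_
        rw [if_pos ((hT b).1 hb), finrank_coxPieceX]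
      · exact fun b hb => if_neg fun h => hb ((hT b).2 h)
      · refine fun b => Submodule.finiteDimensional_of_le (S₂ := coxPieceX d n D) ?_
        split_ifs
        exacts [le_rfl, bot_le]
    have hKXY : Module.finrank ℂ
        ↥(Submodule.restrictScalars ℂ K ⊓ coxPieceXY d e n m (D, E)) =
        ∑ b ∈ (finite_monos_wPP (n := m) E).toFinset, Module.finrank ℂ
          ↥((lexLayers r I (lexRank (wPP e m) b)).restrictScalars ℂ ⊓ coxPieceX d n D) := by
      rw [hinf, finrank_coeffwise _ (finite_monos_wPP E).toFinset]
      · refine Finset.sum_congr rfl fun b hb => ?_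
        rw [if_pos ((hT b).1 hb)]
      · exact fun b hb => if_neg fun h => hb ((hT b).2 h)
      · refine fun b => Submodule.finiteDimensional_of_le (S₂ := coxPieceX d n D) ?_
        split_ifs
        exacts [inf_le_right, bot_le]
    have hcard : (finite_monos_wPP (n := m) E).toFinset.card = (monos (wPP e m) E).ncard :=
      (Set.ncard_eq_toFinset_card _ _).symm
    rw [HFXY, hKXY, hXY, ← Finset.sum_tsub_distrib]
    -- The monomials `b` of degree `E` have the ranks `0, 1, …`, one each.
    · simp only [hlayer]
      rw [sum_lexRank (wPP e m) finite_monos_wPP E fun k =>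
        min (monos (wPP d n) D).ncard (r - k * (monos (wPP d n) D).ncard), sum_min_tsub,
        Finset.sum_const, hcard, smul_eq_mul, mul_comm]
    · intro b _
      rw [← finrank_coxPieceX]
      exact Submodule.finrank_mono inf_le_right
  · ext f
    rw [Ideal.mem_comap]
    change (∀ b, coeff b (toIter (rename Sum.inl f)) ∈ _) ↔ _
    constructor
    · intro h
      have h0 := h 0
      rw [toIter_rename_inl, coeff_C, if_pos rfl, lexRank_wPP_zero] at h0
      exact h0
    · intro hf b
      rw [toIter_rename_inl, coeff_C]
      split_ifs with hb
      · rw [← hb, lexRank_wPP_zero]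
        exact hf
      · exact zero_mem _
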